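/- Let (λ_j)_{j≥1} be a sequence of positive real numbers, let C > 0 and β > α > 0. Then there exists c₁ > 0 such that |λ_j^{-1} − C j^{−α}| ≤ c₁ j^{−β} for all j ≥ 1, if and only if there exists c₅ > 0 such that |λ_j − C^{-1} j^{α}| ≤ c₅ j^{2α−β} for all j ≥ 1. -/

import Mathlib

/-!
Write `u = lam⁻¹`, `v = C j ^ (-α)` and `e = j ^ (-β)`, so that `e = o(v)`. If `u - v = O(e)`, then
`u` and `v` have the same order of magnitude, and `u⁻¹ - v⁻¹ = u⁻¹ (v - u) v⁻¹ = O(e / |v| ^ 2)`.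
The error `e / |v| ^ 2` is in turn `o(v⁻¹)`, so the same estimate applied to `u⁻¹` and `v⁻¹` gives
the converse. An `O` bound along `ℕ` extends to all indices at which the comparison function is
positive, since only finitely many of them are exceptional.
-/

open Asymptotics Filter

section Inverse

variable {ι 𝕜 : Type*} [NormedDivisionRing 𝕜] {l : Filter ι} {u v : ι → 𝕜} {e : ι → ℝ}

theorem isBigO_inv_sub_inv (huv : (fun x ↦ u x - v x) =O[l] e) (hev : e =o[l] v) :
    (fun x ↦ (u x)⁻¹ - (v x)⁻¹) =O[l] fun x ↦ e x / ‖v x‖ ^ 2 := by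
  have hequiv : u ~[l] v := huv.trans_isLittleO hev
  have hzero : ∀ᶠ x in l, u x = 0 ↔ v x = 0 := hequiv.isTheta.eq_zero_iff
  have hinv : (fun x ↦ (u x)⁻¹) =O[l] fun x ↦ ‖v x‖⁻¹ := by
    simpa only [norm_inv] using
      (hequiv.isBigO_symm.inv_rev (hzero.mono fun _ hx ↦ hx.2)).norm_right
  have hinv' : (fun x ↦ (v x)⁻¹) =O[l] fun x ↦ ‖v x‖⁻¹ := by
    simpa only [norm_inv] using (isBigO_refl (fun x ↦ (v x)⁻¹) l).norm_right
  have hvu : (fun x ↦ v x - u x) =O[l] e := by simpa only [neg_sub] using huv.neg_left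
  refine ((hinv.mul hvu).mul hinv').congr' ?_ (.of_forall fun x ↦ by ring)
  filter_upwards [hzero] with x hx
  by_cases hv : v x = 0
  · simp [hv, hx.2 hv]
  · exact (inv_sub_inv' (mt hx.1 hv) hv).symm

theorem isLittleO_div_norm_sq_inv (hev : e =o[l] v) :
    (fun x ↦ e x / ‖v x‖ ^ 2) =o[l] fun x ↦ (v x)⁻¹ := by
  rw [← isLittleO_norm_right]
  refine (hev.norm_right.mul_isBigO (isBigO_refl (fun x ↦ (‖v x‖ ^ 2)⁻¹) l)).congr
    (fun x ↦ (div_eq_mul_inv _ _).symm) fun x ↦ ?_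
  rw [norm_inv, ← div_eq_mul_inv, sq, div_self_mul_self']

theorem isBigO_inv_sub_inv_iff (hev : e =o[l] v) :
    (fun x ↦ (u x)⁻¹ - (v x)⁻¹) =O[l] (fun x ↦ e x / ‖v x‖ ^ 2) ↔
      (fun x ↦ u x - v x) =O[l] e := by
  refine ⟨fun h ↦ ?_, fun h ↦ isBigO_inv_sub_inv h hev⟩
  have herr : (fun x ↦ e x / ‖v x‖ ^ 2 / ‖(v x)⁻¹‖ ^ 2) =O[l] e :=
    isBigO_of_le l fun x ↦ by
      by_cases hv : v x = 0 <;> simp [hv]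
  simpa only [inv_inv] using (isBigO_inv_sub_inv h (isLittleO_div_norm_sq_inv hev)).trans herr

end Inverse

theorem exists_pos_forall_norm_le_mul_iff_isBigO_atTop {E : Type*} [Norm E]
    {f : ℕ → E} {g : ℕ → ℝ} {n : ℕ} (hg : ∀ j, n ≤ j → 0 < g j) :
    (∃ c > (0 : ℝ), ∀ j, n ≤ j → ‖f j‖ ≤ c * g j) ↔ f =O[atTop] g := by
  constructor
  · rintro ⟨c, -, hc⟩
    refine IsBigO.of_bound c ?_
    filter_upwards [eventually_ge_atTop n] with j hj
    rw [Real.norm_of_nonneg (hg j hj).le]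
    exact hc j hj
  · intro h
    obtain ⟨c, hc, hfg⟩ := bound_of_isBigO_nat_atTop h
    refine ⟨c, hc, fun j hj ↦ ?_⟩
    rw [← Real.norm_of_nonneg (hg j hj).le]
    exact hfg (hg j hj).ne'

theorem isLittleO_rpow_rpow_atTop {a b : ℝ} (hab : a < b) :
    (fun x : ℝ ↦ x ^ a) =o[atTop] fun x : ℝ ↦ x ^ b := by
  have hlim := tendsto_rpow_neg_atTop (sub_pos.2 hab)
  refine isLittleO_of_tendsto' ?_ (hlim.congr' ?_)
  · filter_upwards [eventually_gt_atTop 0] with x hx hxb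
    exact absurd hxb (Real.rpow_pos_of_pos hx b).ne'
  · filter_upwards [eventually_gt_atTop 0] with x hx
    rw [neg_sub, Real.rpow_sub hx]

section Power

variable {ι E : Type*} [NormedAddCommGroup E] [NormedSpace ℝ E] {l : Filter ι} {f : ι → ℝ}
  {a b : ℝ} {C : E}

theorem isLittleO_rpow_rpow_smul_const (hf : Tendsto f l atTop) (hab : a < b) (hC : C ≠ 0) :
    (fun x ↦ f x ^ a) =o[l] fun x ↦ f x ^ b • C := by
  have hpow : (fun x ↦ f x ^ a) =o[l] fun x ↦ f x ^ b :=
    (isLittleO_rpow_rpow_atTop hab).comp_tendsto hf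
  have hone : (fun _ ↦ (1 : ℝ)) =O[l] fun _ ↦ C := isBigO_const_const 1 hC l
  simpa only [smul_eq_mul, mul_one] using hpow.smul_isBigO hone

theorem isTheta_rpow_div_norm_rpow_smul_const_sq (hf : ∀ᶠ x in l, 0 < f x) (hC : C ≠ 0) :
    (fun x ↦ f x ^ b / ‖f x ^ a • C‖ ^ 2) =Θ[l] fun x ↦ f x ^ (b - 2 * a) := by
  have hconst : (‖C‖ ^ 2)⁻¹ ≠ 0 := inv_ne_zero (pow_ne_zero 2 (norm_ne_zero_iff.2 hC))
  refine EventuallyEq.trans_isTheta ?_ (isTheta_rfl.const_mul_left hconst)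
  filter_upwards [hf] with x hx
  have hsq : (f x ^ a) ^ 2 = f x ^ (2 * a) := by
    rw [← Real.rpow_mul_natCast hx.le, Nat.cast_ofNat, mul_comm]
  rw [norm_smul, mul_pow, Real.norm_of_nonneg (Real.rpow_nonneg hx.le a), hsq,
    div_mul_eq_div_div, ← Real.rpow_sub hx, div_eq_inv_mul]

end Power

theorem inverse_eigenvalue_asymptotics_equiv_general {𝕜 : Type*} [NormedDivisionRing 𝕜]
    [NormedAlgebra ℝ 𝕜] (lam : ℕ → 𝕜) (_hlam : ∀ j : ℕ, 1 ≤ j → lam j ≠ 0) {C : 𝕜} (hC : C ≠ 0)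
    {α β : ℝ} (hαβ : α < β) :
    (∃ c₁ > (0 : ℝ), ∀ j : ℕ, 1 ≤ j →
        ‖(lam j)⁻¹ - (j : ℝ) ^ (-α) • C‖ ≤ c₁ * (j : ℝ) ^ (-β))
    ↔ (∃ c₅ > (0 : ℝ), ∀ j : ℕ, 1 ≤ j →
        ‖lam j - (j : ℝ) ^ α • C⁻¹‖ ≤ c₅ * (j : ℝ) ^ (2 * α - β)) := by
  have hpow (s : ℝ) (j : ℕ) (hj : 1 ≤ j) : 0 < (j : ℝ) ^ s :=
    Real.rpow_pos_of_pos (Nat.cast_pos.2 hj) s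
  have hcast : Tendsto (fun j : ℕ ↦ (j : ℝ)) atTop atTop := tendsto_natCast_atTop_atTop
  have herr : (fun j : ℕ ↦ (j : ℝ) ^ (-β)) =o[atTop] fun j : ℕ ↦ (j : ℝ) ^ (-α) • C :=
    isLittleO_rpow_rpow_smul_const hcast (neg_lt_neg hαβ) hC
  have hscale : (fun j : ℕ ↦ (j : ℝ) ^ (-β) / ‖(j : ℝ) ^ (-α) • C‖ ^ 2) =Θ[atTop]
      fun j : ℕ ↦ (j : ℝ) ^ (2 * α - β) := by
    convert isTheta_rpow_div_norm_rpow_smul_const_sq (hcast.eventually_gt_atTop 0) hC using 3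
    ring
  rw [exists_pos_forall_norm_le_mul_iff_isBigO_atTop (hpow (-β)),
    exists_pos_forall_norm_le_mul_iff_isBigO_atTop (hpow (2 * α - β)),
    ← isBigO_inv_sub_inv_iff herr, hscale.isBigO_congr_right]
  simp only [inv_inv, smul_inv₀, Real.rpow_neg (Nat.cast_nonneg _)]

/-- For a sequence `λ_j` of positive reals, `C > 0` and `β > α > 0`:
there is `c₁ > 0` with `|λ_j⁻¹ - C j^{-α}| ≤ c₁ j^{-β}` for all `j ≥ 1` iff there is
`c₅ > 0` with `|λ_j - C⁻¹ j^{α}| ≤ c₅ j^{2α-β}` for all `j ≥ 1`. -/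
theorem inverse_eigenvalue_asymptotics_equiv
    (lam : ℕ → ℝ)
    (hpos : ∀ j : ℕ, 1 ≤ j → 0 < lam j)
    (C α β : ℝ) (hC : 0 < C) (hα : 0 < α) (hβ : α < β) :
    (∃ c₁ > (0 : ℝ), ∀ j : ℕ, 1 ≤ j →
        |(lam j)⁻¹ - C * (j : ℝ) ^ (-α)| ≤ c₁ * (j : ℝ) ^ (-β))
    ↔ (∃ c₅ > (0 : ℝ), ∀ j : ℕ, 1 ≤ j →
        |lam j - C⁻¹ * (j : ℝ) ^ α| ≤ c₅ * (j : ℝ) ^ (2 * α - β)) := by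
  simpa only [Real.norm_eq_abs, smul_eq_mul, mul_comm] using
    inverse_eigenvalue_asymptotics_equiv_general lam (fun j hj ↦ (hpos j hj).ne') hC.ne' hβ
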